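/- In the setting of measurable spaces S, S₀, T, T₀, G, G₀ with measurable maps r_S : S → S₀, r_T : T → T₀, r, d : G → G₀, p : S₀ → G₀, q : T₀ → G₀, and s-finite kernels λ_S, λ_T, λ_G, γ_p, γ_q concentrated respectively on the fibers of r_S, r_T, r, p, q, let μ_G⁰ be a measure on G₀ and define μ_G = ∫ λ_G^u dμ_G⁰(u), μ_P⁰ = ∫_G (γ_p^{r(x)} ⊗ δ_x ⊗ γ_q^{d(x)}) dμ_G(x), μ_P = ∫ (λ_S^s ⊗ δ_g ⊗ λ_T^t) dμ_P⁰(s,g,t), μ_T⁰ = ∫ γ_q^u dμ_G⁰(u) and μ_T = ∫ λ_T^t dμ_T⁰(t). Assume: λ_S^s(S) > 0 for every s ∈ S₀, γ_p^v(S₀) > 0 for every v ∈ G₀, λ_G^u(G) > 0 for every u ∈ G₀; and that there exist a measurable involution ι : G → G (ι ∘ ι = id) with r ∘ ι = d, and a measurable function w : G → (0, ∞) with ι_*μ_G = μ_G.withDensity w. Then the pushforward of μ_P under the projection π_T : S × G × T → T, π_T(σ, x, τ) = τ, is mutually absolutely continuous with μ_T. -/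

import Mathlib

open MeasureTheory ProbabilityTheory
open scoped ENNReal

/-- Proposition 6.2 (π_T-half): the projection `π_T : P → T` of the weak pullback
is measure class preserving, `(π_T)_*(μ_P) ∼ μ_T`, using the quasi-invariance of
`μ_G` encoded by the involution `ι` and the positive density `w`. -/
theorem stmt_14 {S S₀ T T₀ G G₀ : Type*}
    [MeasurableSpace S] [MeasurableSpace S₀] [MeasurableSpace T] [MeasurableSpace T₀]
    [MeasurableSpace G] [MeasurableSpace G₀]
    (rS : S → S₀) (rT : T → T₀) (r d : G → G₀) (p : S₀ → G₀) (q : T₀ → G₀)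
    (hrS : Measurable rS) (hrT : Measurable rT) (hr : Measurable r) (hd : Measurable d)
    (hp : Measurable p) (hq : Measurable q)
    (lamS : Kernel S₀ S) (lamT : Kernel T₀ T) (lamG : Kernel G₀ G)
    (γp : Kernel G₀ S₀) (γq : Kernel G₀ T₀)
    [IsSFiniteKernel lamS] [IsSFiniteKernel lamT] [IsSFiniteKernel lamG]
    [IsSFiniteKernel γp] [IsSFiniteKernel γq]
    (hlamS : ∀ s, lamS s ((rS ⁻¹' {s})ᶜ) = 0)
    (hlamT : ∀ t, lamT t ((rT ⁻¹' {t})ᶜ) = 0)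
    (hlamG : ∀ u, lamG u ((r ⁻¹' {u})ᶜ) = 0)
    (hγp : ∀ u, γp u ((p ⁻¹' {u})ᶜ) = 0)
    (hγq : ∀ u, γq u ((q ⁻¹' {u})ᶜ) = 0)
    (μG0 : Measure G₀) (μG : Measure G)
    (μP0 : Measure (S₀ × G × T₀)) (μP : Measure (S × G × T))
    (μT0 : Measure T₀) (μT : Measure T)
    (hμG : ∀ E : Set G, MeasurableSet E → μG E = ∫⁻ u, lamG u E ∂μG0)
    (hμP0 : ∀ E : Set (S₀ × G × T₀), MeasurableSet E →
      μP0 E = ∫⁻ x, ((γp (r x)).prod ((Measure.dirac x).prod (γq (d x)))) E ∂μG)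
    (hμP : ∀ E : Set (S × G × T), MeasurableSet E →
      μP E = ∫⁻ w, ((lamS w.1).prod ((Measure.dirac w.2.1).prod (lamT w.2.2))) E ∂μP0)
    (hμT0 : ∀ E : Set T₀, MeasurableSet E → μT0 E = ∫⁻ u, γq u E ∂μG0)
    (hμT : ∀ E : Set T, MeasurableSet E → μT E = ∫⁻ t, lamT t E ∂μT0)
    (hSpos : ∀ s, 0 < lamS s Set.univ)
    (hγppos : ∀ v, 0 < γp v Set.univ)
    (hGpos : ∀ u, 0 < lamG u Set.univ)
    (ι : G → G) (hι : Measurable ι) (hinv : ι ∘ ι = id) (hrι : r ∘ ι = d)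
    (w : G → ℝ≥0∞) (hw : Measurable w)
    (hwpos : ∀ x, 0 < w x) (hwfin : ∀ x, w x < ∞)
    (hmap : μG.map ι = μG.withDensity w) :
    μP.map (fun z : S × G × T => z.2.2) ≪ μT ∧
    μT ≪ μP.map (fun z : S × G × T => z.2.2) := by
  -- null sets are described by the points where the fibre measure does not vanish
  have key : ∀ E : Set T, MeasurableSet E →
      (μP ((fun z : S × G × T => z.2.2) ⁻¹' E) = 0 ↔ μT E = 0) := by
    intro E hE
    have hA : MeasurableSet {t | lamT t E ≠ 0} :=
      (lamT.measurable_coe hE) (measurableSet_singleton (0 : ℝ≥0∞)).compl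
    set A : Set T₀ := {t | lamT t E ≠ 0} with hAdef
    have hB : MeasurableSet {u | γq u A ≠ 0} :=
      (γq.measurable_coe hA) (measurableSet_singleton (0 : ℝ≥0∞)).compl
    set B : Set G₀ := {u | γq u A ≠ 0} with hBdef
    have h1 : μP ((fun z : S × G × T => z.2.2) ⁻¹' E) = 0 ↔
        μP0 ((fun z : S₀ × G × T₀ => z.2.2) ⁻¹' A) = 0 := by
      have hset : ((fun z : S × G × T => z.2.2) ⁻¹' E)
          = Set.univ ×ˢ (Set.univ ×ˢ E) := by ext; simp
      have hm : Measurable fun z : S₀ × G × T₀ => lamS z.1 Set.univ * lamT z.2.2 E :=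
        ((lamS.measurable_coe MeasurableSet.univ).comp measurable_fst).mul
          ((lamT.measurable_coe hE).comp (measurable_snd.comp measurable_snd))
      rw [hset, hμP _ (MeasurableSet.univ.prod (MeasurableSet.univ.prod hE))]
      simp only [Measure.prod_prod, measure_univ, one_mul]
      rw [lintegral_eq_zero_iff hm, Filter.EventuallyEq, ae_iff]
      congr! 2
      ext z
      simp [hAdef, Measure.measure_univ_eq_zero.not.1 (hSpos z.1).ne']
    have h2 : μP0 ((fun z : S₀ × G × T₀ => z.2.2) ⁻¹' A) = 0 ↔ μG (d ⁻¹' B) = 0 := by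
      have hset : ((fun z : S₀ × G × T₀ => z.2.2) ⁻¹' A)
          = Set.univ ×ˢ (Set.univ ×ˢ A) := by ext; simp
      have hm : Measurable fun x : G => γp (r x) Set.univ * γq (d x) A :=
        ((γp.measurable_coe MeasurableSet.univ).comp hr).mul
          ((γq.measurable_coe hA).comp hd)
      rw [hset, hμP0 _ (MeasurableSet.univ.prod (MeasurableSet.univ.prod hA))]
      simp only [Measure.prod_prod, measure_univ, one_mul]
      rw [lintegral_eq_zero_iff hm, Filter.EventuallyEq, ae_iff]
      congr! 2
      ext x
      simp [hBdef, Measure.measure_univ_eq_zero.not.1 (hγppos (r x)).ne']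
    have h3 : μG (d ⁻¹' B) = 0 ↔ μG (r ⁻¹' B) = 0 := by
      have e : μG (d ⁻¹' B) = μG.withDensity w (r ⁻¹' B) := by
        rw [← hmap, Measure.map_apply hι (hr hB), ← Set.preimage_comp, hrι]
      rw [e, withDensity_apply_eq_zero hw]
      congr! 2
      ext x
      simp [(hwpos x).ne']
    have h4 : μG (r ⁻¹' B) = 0 ↔ μG0 B = 0 := by
      rw [hμG _ (hr hB), lintegral_eq_zero_iff (lamG.measurable_coe (hr hB)),
        Filter.EventuallyEq, ae_iff]
      congr! 2
      ext u
      simp only [Set.mem_ofPred_eq, Pi.zero_apply]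
      constructor
      · intro h
        by_contra hu
        refine h (measure_mono_null ?_ (hlamG u))
        intro x hx hxu
        have hxu' : r x = u := hxu
        exact hu (hxu' ▸ hx)
      · intro hu h
        have hc : lamG u (r ⁻¹' B)ᶜ = 0 := by
          refine measure_mono_null ?_ (hlamG u)
          intro x hx hxu
          have hxu' : r x = u := hxu
          exact hx (show r x ∈ B from hxu' ▸ hu)
        have hun := measure_union_null h hc
        rw [Set.union_compl_self] at hun
        exact (hGpos u).ne' hun
    have h5 : μT0 A = 0 ↔ μG0 B = 0 := by
      rw [hμT0 _ hA, lintegral_eq_zero_iff (γq.measurable_coe hA),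
        Filter.EventuallyEq, ae_iff]
      rfl
    have h6 : μT E = 0 ↔ μT0 A = 0 := by
      rw [hμT _ hE, lintegral_eq_zero_iff (lamT.measurable_coe hE),
        Filter.EventuallyEq, ae_iff]
      rfl
    rw [h1, h2, h3, h4, h6, h5]
  have hπ : Measurable (fun z : S × G × T => z.2.2) := measurable_snd.comp measurable_snd
  constructor
  · refine Measure.AbsolutelyContinuous.mk fun E hE h => ?_
    rw [Measure.map_apply hπ hE]
    exact (key E hE).2 h
  · refine Measure.AbsolutelyContinuous.mk fun E hE h => ?_
    rw [Measure.map_apply hπ hE] at h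
    exact (key E hE).1 h
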